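/- lim_{n→∞} sup_{w∈𝕏} | (Tⁿ)'(w) / ( ∏_{k=-N_{t(n)}+1}^{n-1} P_{k−n}({w_k}) / P_k({w_k}) ) − 1 | = 0; that is, the Radon–Nikodym derivative (Tⁿ)'(w) is asymptotically equal, uniformly in w ∈ 𝕏, to the finite product ∏_{k=-N_{t(n)}+1}^{n-1} P_{k−n}({w_k}) / P_k({w_k}). -/

import Mathlib

open MeasureTheory Filter Topology

noncomputable section

/-- The sequence space `{0,1}^ℤ`, with `true` playing the role of `1`. -/
abbrev Xspace := ℤ → Bool

/-- The left shift `(Tw)_i = w_{i+1}`. -/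
def shiftT (w : Xspace) : Xspace := fun i => w (i + 1)

/-- The inverse of the left shift, so that `P ∘ T = Measure.map shiftInv P`. -/
def shiftInv (w : Xspace) : Xspace := fun i => w (i - 1)

/-- `coordWt p b` is `P_k({b})` when `P_k({0}) = p`. -/
def coordWt (p : ℝ) (b : Bool) : ℝ := if b then 1 - p else p

/-- The set `A_t = {∏_{u=1}^t λ_u^{x_u} : x_u ∈ ℤ, |x_u| ≤ n_u}`. -/
def Aset (lam : ℕ → ℝ) (nn : ℕ → ℕ) (t : ℕ) : Set ℝ :=
  {x | ∃ c : ℕ → ℤ, (∀ u, |c u| ≤ (nn u : ℤ)) ∧ x = ∏ u ∈ Finset.Icc 1 t, lam u ^ c u}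

/-- The data of Kosloff's inductive construction: a summable sequence `ε_t > 0`,
`M_0 = 1`, `λ_t = exp(2^{-k_t})` with `k_t = ⌊log₂(M_{t-1}/ε_t)⌋ + 1`,
`n_t` a positive integer satisfying Property *, `N_t = M_{t-1} + n_t`,
`m_t = N_t (2 + 2^{3N_t})`, `M_t = N_t + m_t`. -/
structure KosloffData where
  eps : ℕ → ℝ
  lam : ℕ → ℝ
  nn : ℕ → ℕ
  M : ℕ → ℕ
  N : ℕ → ℕ
  m : ℕ → ℕ
  eps_pos : ∀ t, 1 ≤ t → 0 < eps t
  eps_summable : Summable eps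
  M_zero : M 0 = 1
  lam_def : ∀ t, 1 ≤ t →
    lam t = Real.exp ((2 : ℝ) ^ (-(⌊Real.logb 2 ((M (t - 1) : ℝ) / eps t)⌋ + 1)))
  nn_pos : ∀ t, 1 ≤ t → 0 < nn t
  prop_star : ∀ t, 1 ≤ t → ∀ a ∈ Aset lam nn (t - 1), a ^ 2 ≤ lam t ^ ((nn t : ℝ) / 4)
  N_def : ∀ t, 1 ≤ t → N t = M (t - 1) + nn t
  m_def : ∀ t, 1 ≤ t → m t = N t * (2 + 2 ^ (3 * N t))
  M_def : ∀ t, 1 ≤ t → M t = N t + m t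

/-- `P` is the product measure `∏_k P_k` of Kosloff's construction, where `p k = P_k({0})`:
`p k = 1/2` for `k ≥ 0`, `p k = 1/(1+λ_t)` for `-N_t < k ≤ -M_{t-1}`, and `p k = 1/2`
for `-M_t < k ≤ -N_t`; cylinders get product mass. -/
def IsKosloffMeasure (D : KosloffData) (p : ℤ → ℝ) (P : Measure Xspace) : Prop :=
  IsProbabilityMeasure P ∧
  (∀ k : ℤ, 0 ≤ k → p k = 1 / 2) ∧
  (∀ t : ℕ, 1 ≤ t → ∀ k : ℤ, -(D.N t : ℤ) < k → k ≤ -(D.M (t - 1) : ℤ) →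
      p k = 1 / (1 + D.lam t)) ∧
  (∀ t : ℕ, 1 ≤ t → ∀ k : ℤ, -(D.M t : ℤ) < k → k ≤ -(D.N t : ℤ) → p k = 1 / 2) ∧
  (∀ k l : ℤ, ∀ b : ℤ → Bool,
    P {w : Xspace | ∀ i ∈ Finset.Icc k l, w i = b i}
      = ∏ i ∈ Finset.Icc k l, ENNReal.ofReal (coordWt (p i) (b i)))

/-- The Radon–Nikodym derivative `(Tⁿ)' = d(P∘Tⁿ)/dP`. -/
def rnD (P : Measure Xspace) (n : ℕ) : Xspace → ENNReal :=
  Measure.rnDeriv (Measure.map (shiftInv^[n]) P) P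

/-- `T` is nonsingular: `P∘T` and `P` are mutually absolutely continuous. -/
def ShiftNonsingular (P : Measure Xspace) : Prop :=
  Measure.map shiftInv P ≪ P ∧ P ≪ Measure.map shiftInv P

/-- The ratio set `R(T,P)` of the shift. -/
def ratioSet (P : Measure Xspace) : Set ℝ :=
  {a | 0 ≤ a ∧ ∀ A : Set Xspace, MeasurableSet A → 0 < P A → ∀ ε : ℝ, 0 < ε → ∃ n : ℕ,
      0 < P (A ∩ shiftT^[n] ⁻¹' A ∩ {w | |(rnD P n w).toReal - a| ≤ ε})}

/-- `t(n) = min {t ≥ 1 : n < N_t}`. -/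
def tOf (D : KosloffData) (n : ℕ) : ℕ := sInf {t : ℕ | 1 ≤ t ∧ n < D.N t}

/-- `Υ_u(w) = ∑_{k=-N_u+1}^{-M_{u-1}} w_k`. -/
def Ups (D : KosloffData) (u : ℕ) (w : Xspace) : ℤ :=
  ∑ k ∈ Finset.Icc (-(D.N u : ℤ) + 1) (-(D.M (u - 1) : ℤ)), (if w k then 1 else 0)

/-- `f_t(w) = ∏_{u=1}^t λ_u^{Υ_u(w)}`. -/
def fT (D : KosloffData) (t : ℕ) (w : Xspace) : ℝ :=
  ∏ u ∈ Finset.Icc 1 t, D.lam u ^ Ups D u w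

/-- The ratio `P_{k-n}({w_k}) / P_k({w_k})`. -/
def rr (p : ℤ → ℝ) (n : ℕ) (w : Xspace) (k : ℤ) : ℝ :=
  coordWt (p (k - n)) (w k) / coordWt (p k) (w k)

/-- A general product measure on `{0,1}^ℤ` with `q k = P_k({1})`. -/
def IsProductMeasure (q : ℤ → ℝ) (P : Measure Xspace) : Prop :=
  IsProbabilityMeasure P ∧
  ∀ k l : ℤ, ∀ b : ℤ → Bool,
    P {w : Xspace | ∀ i ∈ Finset.Icc k l, w i = b i}
      = ∏ i ∈ Finset.Icc k l, ENNReal.ofReal (if b i then q i else 1 - q i)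

/-!
Over a large box of coordinates `P ∘ Tⁿ` and `P` both have product weights, so on the cylinders of
that box their ratio is `∏ P_{k-n}({w_k}) / P_k({w_k})`. Writing `P_k({0}) = sigmoid (-s_k)`, each
factor lies within `exp (±|s_{k-n} - s_k|)`, hence the factors outside a finite set `K` multiply to
`exp (±η)`, where `η` bounds the variation `∑_{k ∉ K} |s_{k-n} - s_k|`. Since cylinders determine
the order between finite measures, `(Tⁿ)'` is within `exp (±η)` of the product over `K`, almost
everywhere.

The log-odds `s` are the constant `log λ_u` on the `u`-th block and `0` off the blocks. Only the two
ends of a block contribute to the variation, at most `2 n log λ_u` in total. For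
`K = [-N_t + 1, n - 1]` with `n ≤ M_t` only the blocks `u > t` contribute, and for these
`n log λ_u ≤ M_{u-1} log λ_u ≤ ε_u`; the sum is twice a tail of `∑ ε_u`.
-/

section MeasureComparison

variable {Ω : Type*} {mΩ : MeasurableSpace Ω} {μ ν : Measure Ω}

lemma measure_le_of_forall_mem_isSetRing_le [IsFiniteMeasure μ] [IsFiniteMeasure ν]
    {C : Set (Set Ω)} (hC : IsSetRing C) (huniv : Set.univ ∈ C)
    (hgen : mΩ = MeasurableSpace.generateFrom C) (hle : ∀ B ∈ C, μ B ≤ ν B) : μ ≤ ν := by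
  refine Measure.le_intro fun A hA _ => ENNReal.le_of_forall_pos_le_add fun ε hε _ => ?_
  obtain ⟨B, hB, hBA⟩ := exists_measure_symmDiff_lt_of_generateFrom_isSetRing (μ := μ + ν) hC
    ⟨{Set.univ}, Set.countable_singleton _, by simpa using huniv, by simp⟩ hgen hA
    (ENNReal.coe_pos.2 hε)
  calc μ A ≤ μ B + μ (symmDiff B A) := by
        rw [symmDiff_comm]; exact tsub_le_iff_left.1 le_measure_symmDiff
    _ ≤ ν B + μ (symmDiff B A) := add_le_add_left (hle B hB) _
    _ ≤ ν A + ν (symmDiff B A) + μ (symmDiff B A) := by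
        gcongr; exact tsub_le_iff_left.1 le_measure_symmDiff
    _ = ν A + (μ + ν) (symmDiff B A) := by rw [Measure.add_apply]; ring
    _ ≤ ν A + ε := by gcongr

lemma rnDeriv_ae_le_of_le_withDensity [SigmaFinite μ] {f : Ω → ENNReal}
    (h : ν ≤ μ.withDensity f) : ν.rnDeriv μ ≤ᵐ[μ] f := by
  refine ae_le_of_forall_setLIntegral_le_of_sigmaFinite (ν.measurable_rnDeriv μ) fun s hs _ => ?_
  rw [← withDensity_apply _ hs, ← withDensity_apply _ hs]
  exact (ν.withDensity_rnDeriv_le μ).trans h s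

lemma ae_le_rnDeriv_of_withDensity_le [SigmaFinite μ] [ν.HaveLebesgueDecomposition μ]
    {f : Ω → ENNReal} (hf : Measurable f) (hν : ν ≪ μ) (h : μ.withDensity f ≤ ν) :
    f ≤ᵐ[μ] ν.rnDeriv μ := by
  refine ae_le_of_forall_setLIntegral_le_of_sigmaFinite hf fun s hs _ => ?_
  rw [← withDensity_apply _ hs, ← withDensity_apply _ hs, Measure.withDensity_rnDeriv_eq ν μ hν]
  exact h s

end MeasureComparison

section Cylinders

variable {ι : Type*} {α : ι → Type*}

/-- The elementary cylinder of all points with the same `J`-coordinates as `b`. -/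
def agreeOn (J : Finset ι) (b : ∀ i, α i) : Set (∀ i, α i) := {w | ∀ i ∈ J, w i = b i}

lemma restrict_preimage_singleton_restrict (J : Finset ι) (b : ∀ i, α i) :
    J.restrict ⁻¹' {J.restrict b} = agreeOn J b := by
  ext w
  simp [agreeOn, funext_iff]

variable [∀ i, MeasurableSpace (α i)] [∀ i, MeasurableSingletonClass (α i)]

lemma measurableSet_agreeOn (J : Finset ι) (b : ∀ i, α i) : MeasurableSet (agreeOn J b) := by
  rw [← restrict_preimage_singleton_restrict]
  exact J.measurable_restrict (measurableSet_singleton _)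

lemma measure_cylinder_le_of_agreeOn_le [∀ i, Countable (α i)] {μ ν : Measure (∀ i, α i)}
    {J : Finset ι} (h : ∀ b, μ (agreeOn J b) ≤ ν (agreeOn J b)) (S : Set (∀ i : J, α i)) :
    μ (cylinder J S) ≤ ν (cylinder J S) := by
  have hmeas : ∀ y ∈ S, MeasurableSet (J.restrict (π := α) ⁻¹' {y}) := fun y _ =>
    J.measurable_restrict (measurableSet_singleton y)
  rw [cylinder, ← tsum_measure_preimage_singleton S.to_countable hmeas,
    ← tsum_measure_preimage_singleton S.to_countable hmeas]
  refine ENNReal.tsum_le_tsum fun ⟨y, _⟩ => ?_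
  rcases (J.restrict (π := α) ⁻¹' {y}).eq_empty_or_nonempty with hempty | ⟨b, rfl⟩
  · simp [hempty]
  · rw [restrict_preimage_singleton_restrict]
    exact h b

lemma measure_le_of_eventually_agreeOn_le [∀ i, Countable (α i)] {μ ν : Measure (∀ i, α i)}
    [IsFiniteMeasure μ] [IsFiniteMeasure ν] {κ : Type*} {l : Filter κ} [l.NeBot]
    {J : κ → Finset ι} (hJ : Tendsto J l atTop)
    (h : ∀ᶠ m in l, ∀ b, μ (agreeOn (J m) b) ≤ ν (agreeOn (J m) b)) : μ ≤ ν := by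
  refine measure_le_of_forall_mem_isSetRing_le isSetRing_measurableCylinders
    (univ_mem_measurableCylinders α) generateFrom_measurableCylinders.symm fun B hB => ?_
  obtain ⟨I, S, -, rfl⟩ := (mem_measurableCylinders B).1 hB
  obtain ⟨m, hm, hIm⟩ := (h.and (hJ.eventually_ge_atTop I)).exists
  have hcyl : cylinder I S = cylinder (J m) (Finset.restrict₂ hIm ⁻¹' S) := rfl
  rw [hcyl]
  exact measure_cylinder_le_of_agreeOn_le hm _

end Cylinders

section ProductWeights

variable {ι : Type*} {α : ι → Type*}

/-- The density `∏_{i ∈ K} u_i({w_i}) / v_i({w_i})` of the product of the weights `u` with respect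
to the product of the weights `v`, on the coordinates in `K`. -/
def weightRatio (u v : ∀ i, α i → ℝ) (K : Finset ι) (w : ∀ i, α i) : ℝ :=
  ∏ i ∈ K, u i (w i) / v i (w i)

lemma weightRatio_congr (u v : ∀ i, α i → ℝ) {J K : Finset ι} (hKJ : K ⊆ J) {w b : ∀ i, α i}
    (hw : w ∈ agreeOn J b) : weightRatio u v K w = weightRatio u v K b :=
  Finset.prod_congr rfl fun i hi => by rw [hw i (hKJ hi)]

variable {u v : ∀ i, α i → ℝ}

lemma weightRatio_pos (hu : ∀ i a, 0 < u i a) (hv : ∀ i a, 0 < v i a) (K : Finset ι)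
    (w : ∀ i, α i) : 0 < weightRatio u v K w :=
  Finset.prod_pos fun i _ => div_pos (hu i _) (hv i _)

lemma weightRatio_sdiff_mul_weightRatio_mul_prod [DecidableEq ι] (hv : ∀ i a, 0 < v i a)
    {J K : Finset ι} (hKJ : K ⊆ J) (b : ∀ i, α i) :
    weightRatio u v (J \ K) b * weightRatio u v K b * ∏ i ∈ J, v i (b i) =
      ∏ i ∈ J, u i (b i) := by
  rw [weightRatio, weightRatio, Finset.prod_sdiff hKJ, ← Finset.prod_mul_distrib]
  exact Finset.prod_congr rfl fun i _ => div_mul_cancel₀ _ (hv i _).ne'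

lemma exists_forall_weightRatio_le [∀ i, Finite (α i)] (hu : ∀ i a, 0 < u i a)
    (hv : ∀ i a, 0 < v i a) (K : Finset ι) : ∃ B, ∀ w, weightRatio u v K w ≤ B := by
  have hbdd (i : ι) : ∃ B, ∀ a, u i a / v i a ≤ B := by
    obtain ⟨B, hB⟩ := (Set.finite_range fun a => u i a / v i a).bddAbove
    exact ⟨B, fun a => hB ⟨a, rfl⟩⟩
  choose B hB using hbdd
  exact ⟨∏ i ∈ K, B i, fun w =>
    Finset.prod_le_prod (fun i _ => (div_pos (hu i _) (hv i _)).le) fun i _ => hB i _⟩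

variable [∀ i, MeasurableSpace (α i)]

/-- The measure `μ` gives each elementary cylinder over `J` the product of the weights `v i`. The
weights are real, to match `coordWt`, so a negative one would count as `0`. -/
def HasProductWeights (μ : Measure (∀ i, α i)) (v : ∀ i, α i → ℝ) (J : Finset ι) : Prop :=
  ∀ b, μ (agreeOn J b) = ∏ i ∈ J, ENNReal.ofReal (v i (b i))

lemma HasProductWeights.measure_agreeOn {μ : Measure (∀ i, α i)} {J : Finset ι}
    (hμ : HasProductWeights μ v J) (hv : ∀ i a, 0 < v i a) (b : ∀ i, α i) :
    μ (agreeOn J b) = ENNReal.ofReal (∏ i ∈ J, v i (b i)) := by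
  rw [hμ b, ENNReal.ofReal_prod_of_nonneg fun i _ => (hv i _).le]

lemma isFiniteMeasure_withDensity_weightRatio [∀ i, Finite (α i)] (hu : ∀ i a, 0 < u i a)
    (hv : ∀ i a, 0 < v i a) (μ : Measure (∀ i, α i)) [IsFiniteMeasure μ] {c : ℝ} (hc : 0 ≤ c)
    (K : Finset ι) :
    IsFiniteMeasure (μ.withDensity fun w => ENNReal.ofReal (c * weightRatio u v K w)) := by
  obtain ⟨B, hB⟩ := exists_forall_weightRatio_le hu hv K
  refine isFiniteMeasure_withDensity (ne_top_of_le_ne_top (b := ∫⁻ _, ENNReal.ofReal (c * B) ∂μ) ?_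
    (lintegral_mono fun w => ENNReal.ofReal_le_ofReal (mul_le_mul_of_nonneg_left (hB w) hc)))
  simpa using ENNReal.mul_ne_top ENNReal.ofReal_ne_top (measure_ne_top μ _)

variable [∀ i, MeasurableSingletonClass (α i)]

lemma measurable_weightRatio [∀ i, Countable (α i)] (u v : ∀ i, α i → ℝ) (K : Finset ι) :
    Measurable (weightRatio u v K) :=
  Finset.measurable_fun_prod _ fun i _ =>
    (measurable_of_countable fun a => u i a / v i a).comp (measurable_pi_apply i)

lemma withDensity_weightRatio_agreeOn {μ : Measure (∀ i, α i)} {J K : Finset ι}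
    (hv : ∀ i a, 0 < v i a) (hμ : HasProductWeights μ v J) (hKJ : K ⊆ J) (c : ℝ) (b : ∀ i, α i) :
    (μ.withDensity fun w => ENNReal.ofReal (c * weightRatio u v K w)) (agreeOn J b) =
      ENNReal.ofReal (c * weightRatio u v K b * ∏ i ∈ J, v i (b i)) := by
  have hconst : Set.EqOn (fun w => ENNReal.ofReal (c * weightRatio u v K w))
      (fun _ => ENNReal.ofReal (c * weightRatio u v K b)) (agreeOn J b) := fun w hw => by
    simp only [weightRatio_congr u v hKJ hw]
  rw [withDensity_apply _ (measurableSet_agreeOn J b),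
    setLIntegral_congr_fun (measurableSet_agreeOn J b) hconst, setLIntegral_const,
    hμ.measure_agreeOn hv, ENNReal.ofReal_mul' (Finset.prod_nonneg fun i _ => (hv i _).le)]

variable [∀ i, Finite (α i)] [DecidableEq ι] {μ ν : Measure (∀ i, α i)} [IsFiniteMeasure μ]
  [IsFiniteMeasure ν] {κ : Type*} {l : Filter κ} [l.NeBot] {J : κ → Finset ι} {K : Finset ι} {c : ℝ}

lemma le_withDensity_weightRatio (hu : ∀ i a, 0 < u i a) (hv : ∀ i a, 0 < v i a)
    (hJ : Tendsto J l atTop) (hμ : ∀ m, HasProductWeights μ v (J m))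
    (hν : ∀ m, HasProductWeights ν u (J m)) (hc : 0 ≤ c)
    (htail : ∀ m b, weightRatio u v (J m \ K) b ≤ c) :
    ν ≤ μ.withDensity fun w => ENNReal.ofReal (c * weightRatio u v K w) := by
  have := isFiniteMeasure_withDensity_weightRatio hu hv μ hc K
  refine measure_le_of_eventually_agreeOn_le hJ ?_
  filter_upwards [hJ.eventually_ge_atTop K] with m hKJ b
  rw [(hν m).measure_agreeOn hu, withDensity_weightRatio_agreeOn hv (hμ m) hKJ,
    ← weightRatio_sdiff_mul_weightRatio_mul_prod (u := u) hv hKJ]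
  have hK := (weightRatio_pos hu hv K b).le
  have hprod : 0 ≤ ∏ i ∈ J m, v i (b i) := Finset.prod_nonneg fun i _ => (hv i _).le
  gcongr
  exact htail m b

lemma withDensity_weightRatio_le (hu : ∀ i a, 0 < u i a) (hv : ∀ i a, 0 < v i a)
    (hJ : Tendsto J l atTop) (hμ : ∀ m, HasProductWeights μ v (J m))
    (hν : ∀ m, HasProductWeights ν u (J m)) (hc : 0 ≤ c)
    (htail : ∀ m b, c ≤ weightRatio u v (J m \ K) b) :
    (μ.withDensity fun w => ENNReal.ofReal (c * weightRatio u v K w)) ≤ ν := by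
  have := isFiniteMeasure_withDensity_weightRatio hu hv μ hc K
  refine measure_le_of_eventually_agreeOn_le hJ ?_
  filter_upwards [hJ.eventually_ge_atTop K] with m hKJ b
  rw [(hν m).measure_agreeOn hu, withDensity_weightRatio_agreeOn hv (hμ m) hKJ,
    ← weightRatio_sdiff_mul_weightRatio_mul_prod (u := u) hv hKJ]
  have hK := (weightRatio_pos hu hv K b).le
  have hprod : 0 ≤ ∏ i ∈ J m, v i (b i) := Finset.prod_nonneg fun i _ => (hv i _).le
  gcongr
  exact htail m b

lemma ae_rnDeriv_toReal_mem_Icc_weightRatio {η : ℝ} (hu : ∀ i a, 0 < u i a)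
    (hv : ∀ i a, 0 < v i a) (hJ : Tendsto J l atTop) (hμ : ∀ m, HasProductWeights μ v (J m))
    (hν : ∀ m, HasProductWeights ν u (J m))
    (htail : ∀ m b, weightRatio u v (J m \ K) b ∈ Set.Icc (Real.exp (-η)) (Real.exp η)) :
    ∀ᵐ w ∂μ, (ν.rnDeriv μ w).toReal ∈
      Set.Icc (Real.exp (-η) * weightRatio u v K w) (Real.exp η * weightRatio u v K w) := by
  have hupper := le_withDensity_weightRatio hu hv hJ hμ hν (Real.exp_nonneg η)
    fun m b => (htail m b).2
  have hlower := withDensity_weightRatio_le hu hv hJ hμ hν (Real.exp_nonneg (-η))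
    fun m b => (htail m b).1
  have hac : ν ≪ μ := (Measure.absolutelyContinuous_of_le hupper).trans
    (withDensity_absolutelyContinuous _ _)
  have hmeas := ((measurable_weightRatio u v K).const_mul (Real.exp (-η))).ennreal_ofReal
  filter_upwards [rnDeriv_ae_le_of_le_withDensity hupper,
    ae_le_rnDeriv_of_withDensity_le hmeas hac hlower] with w hle hge
  refine ⟨(ENNReal.ofReal_le_iff_le_toReal (ne_top_of_le_ne_top ENNReal.ofReal_ne_top hle)).1 hge,
    ENNReal.toReal_le_of_le_ofReal ?_ hle⟩
  exact mul_nonneg (Real.exp_nonneg η) (weightRatio_pos hu hv K w).le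

end ProductWeights

section Reindexing

variable {ι κ β : Type*} [MeasurableSpace β]

lemma measurable_comp_right (σ : ι → κ) : Measurable fun w : κ → β => w ∘ σ :=
  measurable_pi_lambda _ fun i => measurable_pi_apply (σ i)

lemma HasProductWeights.map_comp_equiv [MeasurableSingletonClass β] {μ : Measure (κ → β)}
    {v : κ → β → ℝ} (σ : ι ≃ κ) {J : Finset ι}
    (hμ : HasProductWeights μ v (J.map σ.toEmbedding)) :
    HasProductWeights (μ.map fun w => w ∘ σ) (fun i => v (σ i)) J := by
  intro (b : ι → β)
  have hpre : (fun w : κ → β => w ∘ σ) ⁻¹' agreeOn J b =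
      agreeOn (J.map σ.toEmbedding) (b ∘ σ.symm) := by
    ext w
    simp only [agreeOn, Set.mem_preimage, Set.mem_ofPred_eq, Finset.forall_mem_map,
      Function.comp_apply, Equiv.coe_toEmbedding, Equiv.symm_apply_apply]
  rw [Measure.map_apply (measurable_comp_right σ) (measurableSet_agreeOn J b), hpre, hμ,
    Finset.prod_map]
  simp

lemma shiftInv_iterate_eq_comp_subRight (n : ℕ) :
    shiftInv^[n] = fun w => w ∘ Equiv.subRight (n : ℤ) := by
  induction n with
  | zero => ext; simp
  | succ n ih =>
    ext w i
    rw [Function.iterate_succ_apply, ih]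
    simp only [shiftInv, Function.comp_apply, Equiv.subRight_apply, Nat.cast_succ, sub_sub]

lemma tendsto_Icc_neg_natCast_atTop :
    Tendsto (fun m : ℕ => Finset.Icc (-(m : ℤ)) m) atTop atTop := by
  refine tendsto_atTop_finset_of_monotone (fun a b hab => ?_) fun k => ⟨k.natAbs, ?_⟩
  · exact Finset.Icc_subset_Icc (by lia) (by lia)
  · exact Finset.mem_Icc.2 ⟨by lia, by lia⟩

end Reindexing

section LogOdds

open Real (sigmoid)

lemma sigmoid_le_exp_abs_sub_mul_sigmoid (x y : ℝ) :
    sigmoid x ≤ Real.exp |x - y| * sigmoid y := by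
  rw [Real.sigmoid_def, Real.sigmoid_def, ← div_eq_mul_inv, inv_eq_one_div,
    div_le_div_iff₀ (by positivity) (by positivity), one_mul, mul_add, mul_one, ← Real.exp_add]
  gcongr
  · exact Real.one_le_exp (abs_nonneg _)
  · linarith [le_abs_self (x - y)]

lemma coordWt_sigmoid_neg (x : ℝ) (b : Bool) :
    coordWt (sigmoid (-x)) b = sigmoid (if b then x else -x) := by
  cases b <;> simp [coordWt, Real.sigmoid_neg]

lemma coordWt_sigmoid_neg_div_mem_Icc (x y : ℝ) (b : Bool) :
    coordWt (sigmoid (-x)) b / coordWt (sigmoid (-y)) b ∈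
      Set.Icc (Real.exp (-|x - y|)) (Real.exp |x - y|) := by
  have habs : |(if b then x else -x) - (if b then y else -y)| = |x - y| := by
    cases b
    · simp [neg_add_eq_sub, abs_sub_comm]
    · simp
  rw [coordWt_sigmoid_neg, coordWt_sigmoid_neg, ← habs, Real.exp_neg, Set.mem_Icc,
    le_div_iff₀ (Real.sigmoid_pos _), div_le_iff₀ (Real.sigmoid_pos _),
    inv_mul_le_iff₀ (Real.exp_pos _)]
  refine ⟨?_, sigmoid_le_exp_abs_sub_mul_sigmoid _ _⟩
  rw [abs_sub_comm]
  exact sigmoid_le_exp_abs_sub_mul_sigmoid _ _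

lemma weightRatio_coordWt_mem_Icc {ι : Type*} (r s : ι → ℝ) (S : Finset ι) (b : ι → Bool) :
    weightRatio (fun k => coordWt (sigmoid (-r k))) (fun k => coordWt (sigmoid (-s k))) S b ∈
      Set.Icc (Real.exp (-∑ k ∈ S, |r k - s k|)) (Real.exp (∑ k ∈ S, |r k - s k|)) := by
  have hfactor (k : ι) := coordWt_sigmoid_neg_div_mem_Icc (r k) (s k) (b k)
  rw [← Finset.sum_neg_distrib, Real.exp_sum, Real.exp_sum]
  exact ⟨Finset.prod_le_prod (fun k _ => (Real.exp_pos _).le) fun k _ => (hfactor k).1,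
    Finset.prod_le_prod (fun k _ => (Real.exp_pos _).le.trans (hfactor k).1)
      fun k _ => (hfactor k).2⟩

lemma abs_div_sub_one_le_exp_sub_one {r f η : ℝ} (hf : 0 < f)
    (hr : r ∈ Set.Icc (Real.exp (-η) * f) (Real.exp η * f)) : |r / f - 1| ≤ Real.exp η - 1 := by
  have hlower := (le_div_iff₀ hf).2 hr.1
  have hupper := (div_le_iff₀ hf).2 hr.2
  rw [abs_le]
  constructor <;> linarith [Real.add_one_le_exp η, Real.add_one_le_exp (-η)]

variable {p : ℤ → ℝ} {P : Measure Xspace}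

lemma IsProductMeasure.hasProductWeights_coordWt (hP : IsProductMeasure (fun k => 1 - p k) P)
    (k l : ℤ) : HasProductWeights P (fun k => coordWt (p k)) (Finset.Icc k l) := fun b =>
  (hP.2 k l b).trans <| Finset.prod_congr rfl fun i _ => by simp [coordWt]

lemma IsProductMeasure.hasProductWeights_map_shiftInv_iterate
    (hP : IsProductMeasure (fun k => 1 - p k) P) (n : ℕ) (k l : ℤ) :
    HasProductWeights (P.map shiftInv^[n]) (fun k => coordWt (p (k - n))) (Finset.Icc k l) := by
  have hshift : (Finset.Icc k l).map (Equiv.subRight (n : ℤ)).toEmbedding =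
      Finset.Icc (k - n) (l - n) := by
    ext i
    simp [← le_sub_iff_add_le]
  rw [shiftInv_iterate_eq_comp_subRight]
  exact HasProductWeights.map_comp_equiv (v := fun k => coordWt (p k)) (Equiv.subRight (n : ℤ))
    (hshift ▸ hP.hasProductWeights_coordWt _ _)

lemma IsProductMeasure.abs_rnD_div_prod_rr_sub_one_le {s : ℤ → ℝ}
    (hP : IsProductMeasure (fun k => 1 - p k) P) (hp : ∀ k, p k = sigmoid (-s k)) {n : ℕ}
    {K : Finset ℤ} {η : ℝ} (hη : ∀ S, Disjoint S K → ∑ k ∈ S, |s (k - n) - s k| ≤ η) :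
    ∀ᵐ w ∂P, |(rnD P n w).toReal / ∏ k ∈ K, rr p n w k - 1| ≤ Real.exp η - 1 := by
  obtain rfl : p = fun k => sigmoid (-s k) := funext hp
  have := hP.1
  have hpos (x : ℝ) (b : Bool) : 0 < coordWt (sigmoid (-x)) b := by
    rw [coordWt_sigmoid_neg]
    exact Real.sigmoid_pos _
  have htail (m : ℕ) (b : ℤ → Bool) := weightRatio_coordWt_mem_Icc
    (fun k => s (k - n)) s (Finset.Icc (-(m : ℤ)) m \ K) b
  have hbounds := ae_rnDeriv_toReal_mem_Icc_weightRatio (ν := P.map shiftInv^[n])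
    (fun k => hpos (s (k - n))) (fun k => hpos (s k)) tendsto_Icc_neg_natCast_atTop
    (fun _ => hP.hasProductWeights_coordWt _ _)
    (fun _ => hP.hasProductWeights_map_shiftInv_iterate n _ _) fun m b =>
      Set.Icc_subset_Icc (Real.exp_le_exp.2 (neg_le_neg (hη _ Finset.sdiff_disjoint)))
        (Real.exp_le_exp.2 (hη _ Finset.sdiff_disjoint)) (htail m b)
  filter_upwards [hbounds] with w hw
  exact abs_div_sub_one_le_exp_sub_one
    (weightRatio_pos (fun k => hpos (s (k - n))) (fun k => hpos (s k)) K w) hw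

end LogOdds

section Blocks

/-- The scales of a block construction: the blocks `(-N (u + 1), -M u]` of coordinates are separated
by the gaps `(-M (u + 1), -N (u + 1)]`. As in the construction of Kosloff, `N` is only relevant at
positive indices. -/
structure IsBlockScale (M N : ℕ → ℕ) : Prop where
  strictMono : StrictMono M
  zero_pos : 0 < M 0
  le_N (u : ℕ) : M u ≤ N (u + 1)
  N_le (u : ℕ) : N (u + 1) ≤ M (u + 1)

/-- The `u`-th block of coordinates, counted from `u = 0`; it is the block `t = u + 1` of the
construction of Kosloff. -/
def block (M N : ℕ → ℕ) (u : ℕ) : Set ℤ := Set.Ioc (-(N (u + 1) : ℤ)) (-(M u : ℤ))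

/-- The log-odds `log (P_k({1}) / P_k({0}))` of the coordinates of a block product measure: `x u` on
the `u`-th block and `0` outside all the blocks. -/
def blockLogOdds (M N : ℕ → ℕ) (x : ℕ → ℝ) (k : ℤ) : ℝ :=
  ∑' u, (block M N u).indicator (fun _ => x u) k

lemma abs_indicator_Ioc_sub_sub_indicator_Ioc_le (a b k : ℤ) (n : ℕ) (y : ℝ) :
    |(Set.Ioc a b).indicator (fun _ => y) (k - n) - (Set.Ioc a b).indicator (fun _ => y) k| ≤
      (if k ∈ Finset.Ioc a (a + n) then |y| else 0) +
        if k ∈ Finset.Ioc b (b + n) then |y| else 0 := by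
  simp only [Set.indicator_apply, Set.mem_Ioc, Finset.mem_Ioc]
  split_ifs <;> first | lia | simp

lemma sum_ite_mem_Ioc_add_le (S : Finset ℤ) (a : ℤ) (n : ℕ) {y : ℝ} (hy : 0 ≤ y) :
    ∑ k ∈ S, (if k ∈ Finset.Ioc a (a + n) then y else 0) ≤ n * y := by
  rw [Finset.sum_ite_mem, Finset.sum_const, nsmul_eq_mul]
  gcongr
  simpa using Finset.card_le_card (Finset.inter_subset_right (s₁ := S) (s₂ := Finset.Ioc a (a + n)))

lemma sum_abs_indicator_Ioc_sub_sub_indicator_Ioc_le (S : Finset ℤ) (a b : ℤ) (n : ℕ) (y : ℝ) :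
    ∑ k ∈ S, |(Set.Ioc a b).indicator (fun _ => y) (k - n) -
      (Set.Ioc a b).indicator (fun _ => y) k| ≤ 2 * (n * |y|) := by
  refine (Finset.sum_le_sum fun k _ =>
    abs_indicator_Ioc_sub_sub_indicator_Ioc_le a b k n y).trans ?_
  rw [Finset.sum_add_distrib, two_mul]
  exact add_le_add (sum_ite_mem_Ioc_add_le S a n (abs_nonneg y))
    (sum_ite_mem_Ioc_add_le S b n (abs_nonneg y))

namespace IsBlockScale

variable {M N : ℕ → ℕ} {k : ℤ} {t u n : ℕ}

lemma N_succ_le_N_of_lt (h : IsBlockScale M N) (hut : u < t) : N (u + 1) ≤ N t := by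
  obtain ⟨t, rfl⟩ := Nat.exists_eq_succ_of_ne_zero (Nat.ne_zero_of_lt hut)
  rcases (Nat.lt_succ_iff.1 hut).eq_or_lt with rfl | hlt
  · exact le_rfl
  · exact (h.N_le u).trans ((h.strictMono.monotone hlt).trans (h.le_N t))

lemma M_pos (h : IsBlockScale M N) (u : ℕ) : 0 < M u :=
  h.zero_pos.trans_le (h.strictMono.monotone u.zero_le)

lemma notMem_block_of_nonneg (h : IsBlockScale M N) (hk : 0 ≤ k) (u : ℕ) : k ∉ block M N u := by
  intro hmem
  have := h.M_pos u
  have := hmem.2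
  lia

lemma notMem_block_of_lt_of_le_neg_N (h : IsBlockScale M N) (hut : u < t) (hk : k ≤ -(N t : ℤ)) :
    k ∉ block M N u := by
  intro hmem
  have := h.N_succ_le_N_of_lt hut
  have := hmem.1
  lia

lemma notMem_block_of_natAbs_lt (h : IsBlockScale M N) (hk : k.natAbs < u) : k ∉ block M N u := by
  intro hmem
  have := h.strictMono.le_apply (x := u)
  have := hmem.2
  lia

lemma notMem_block_of_ne (h : IsBlockScale M N) (hlt : -(M (t + 1) : ℤ) < k)
    (hle : k ≤ -(M t : ℤ)) (hut : u ≠ t) : k ∉ block M N u := by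
  intro hmem
  rcases hut.lt_or_gt with hut | htu
  · have := (h.N_le u).trans (h.strictMono.monotone hut)
    have := hmem.1
    lia
  · have := h.strictMono.monotone htu
    have := hmem.2
    lia

lemma exists_neg_M_succ_lt_le_neg_M (h : IsBlockScale M N) (hk : k ≤ -(M 0 : ℤ)) :
    ∃ u, -(M (u + 1) : ℤ) < k ∧ k ≤ -(M u : ℤ) := by
  obtain ⟨u, hle, hlt⟩ := h.strictMono.exists_between_of_tendsto_atTop h.strictMono.tendsto_atTop
    (show M 0 < k.natAbs + 1 by lia)
  exact ⟨u, by lia, by lia⟩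

variable (x : ℕ → ℝ)

lemma blockLogOdds_of_nonneg (h : IsBlockScale M N) (hk : 0 ≤ k) : blockLogOdds M N x k = 0 := by
  simp [blockLogOdds, Set.indicator_of_notMem (h.notMem_block_of_nonneg hk _)]

lemma blockLogOdds_eq_indicator (h : IsBlockScale M N) (hlt : -(M (t + 1) : ℤ) < k)
    (hle : k ≤ -(M t : ℤ)) :
    blockLogOdds M N x k = (block M N t).indicator (fun _ => x t) k :=
  tsum_eq_single t fun _ hut => Set.indicator_of_notMem (h.notMem_block_of_ne hlt hle hut) _

lemma blockLogOdds_eq_sum_range (h : IsBlockScale M N) {U : ℕ} (hU : k.natAbs < U) :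
    blockLogOdds M N x k = ∑ u ∈ Finset.range U, (block M N u).indicator (fun _ => x u) k :=
  tsum_eq_sum fun _ hu => Set.indicator_of_notMem
    (h.notMem_block_of_natAbs_lt (hU.trans_le (not_lt.1 (mt Finset.mem_range.2 hu)))) _

lemma sum_abs_indicator_block_sub_le (h : IsBlockScale M N) {S : Finset ℤ}
    (hS : Disjoint S (Finset.Icc (-(N t : ℤ) + 1) (n - 1))) (hn : n ≤ M t) (u : ℕ) :
    ∑ k ∈ S, |(block M N u).indicator (fun _ => x u) (k - n) -
        (block M N u).indicator (fun _ => x u) k| ≤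
      if t ≤ u then 2 * (M u * |x u|) else 0 := by
  split_ifs with htu
  · have hnu : (n : ℝ) ≤ M u := mod_cast hn.trans (h.strictMono.monotone htu)
    exact (sum_abs_indicator_Ioc_sub_sub_indicator_Ioc_le S _ _ n (x u)).trans (by gcongr)
  · refine (Finset.sum_eq_zero fun k hk => ?_).le
    have hk := Finset.disjoint_left.1 hS hk
    rw [Finset.mem_Icc] at hk
    have hnot (j : ℤ) (hj : j ≤ -(N t : ℤ) ∨ 0 ≤ j) : j ∉ block M N u :=
      hj.elim (h.notMem_block_of_lt_of_le_neg_N (not_le.1 htu)) (h.notMem_block_of_nonneg · u)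
    rw [Set.indicator_of_notMem (hnot (k - n) (by lia)),
      Set.indicator_of_notMem (hnot k (by lia)), sub_zero, abs_zero]

lemma sum_abs_blockLogOdds_sub_le (h : IsBlockScale M N) {S : Finset ℤ}
    (hx : Summable fun u => M u * |x u|)
    (hS : Disjoint S (Finset.Icc (-(N t : ℤ) + 1) (n - 1))) (hn : n ≤ M t) :
    ∑ k ∈ S, |blockLogOdds M N x (k - n) - blockLogOdds M N x k| ≤
      2 * ∑' u, M (u + t) * |x (u + t)| := by
  obtain ⟨U, hU⟩ : ∃ U, ∀ k ∈ S, (k - n).natAbs < t + U ∧ k.natAbs < t + U := by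
    refine ⟨S.sup Int.natAbs + n + 1, fun k hk => ?_⟩
    have := Finset.le_sup (f := Int.natAbs) hk
    lia
  calc ∑ k ∈ S, |blockLogOdds M N x (k - n) - blockLogOdds M N x k|
      ≤ ∑ k ∈ S, ∑ u ∈ Finset.range (t + U), |(block M N u).indicator (fun _ => x u) (k - n) -
          (block M N u).indicator (fun _ => x u) k| := Finset.sum_le_sum fun k hk => by
        rw [h.blockLogOdds_eq_sum_range x (hU k hk).1, h.blockLogOdds_eq_sum_range x (hU k hk).2,
          ← Finset.sum_sub_distrib]
        exact Finset.abs_sum_le_sum_abs _ _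
    _ ≤ ∑ u ∈ Finset.range (t + U), if t ≤ u then 2 * (M u * |x u|) else 0 := by
        rw [Finset.sum_comm]
        exact Finset.sum_le_sum fun u _ => h.sum_abs_indicator_block_sub_le x hS hn u
    _ = 2 * ∑ u ∈ Finset.range U, M (u + t) * |x (u + t)| := by
        have hlt : ∀ u ∈ Finset.range t, ¬ t ≤ u := fun u hu => not_le.2 (Finset.mem_range.1 hu)
        rw [Finset.sum_range_add, Finset.sum_eq_zero fun u hu => if_neg (hlt u hu), zero_add,
          Finset.mul_sum]
        exact Finset.sum_congr rfl fun u _ => by rw [if_pos (t.le_add_right u), add_comm]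
    _ ≤ 2 * ∑' u, M (u + t) * |x (u + t)| := by
        gcongr
        exact ((summable_nat_add_iff t).2 hx).sum_le_tsum _ fun u _ => by positivity

end IsBlockScale

end Blocks

theorem rnDeriv_asymptotic_finite_product_general {M N : ℕ → ℕ} (h : IsBlockScale M N)
    {x : ℕ → ℝ} (hx : Summable fun u => M u * |x u|) {p : ℤ → ℝ} {P : Measure Xspace}
    (hp : ∀ k, p k = Real.sigmoid (-blockLogOdds M N x k))
    (hP : IsProductMeasure (fun k => 1 - p k) P) {δ : ℝ} (hδ : 0 < δ) :
    ∃ n₀, ∀ n ≥ n₀, ∀ t, n ≤ M t → ∀ᵐ w ∂P,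
      |(rnD P n w).toReal /
          (∏ k ∈ Finset.Icc (-(N t : ℤ) + 1) ((n : ℤ) - 1), rr p n w k) - 1| ≤ δ := by
  have htail : Tendsto (fun t => 2 * ∑' u, M (u + t) * |x (u + t)|) atTop (𝓝 0) := by
    simpa using (tendsto_sum_nat_add fun u => M u * |x u|).const_mul 2
  have hη : 0 < Real.log (1 + δ) := Real.log_pos (by linarith)
  obtain ⟨t₀, ht₀⟩ := eventually_atTop.1 (htail.eventually_le_const hη)
  refine ⟨M t₀, fun n hn t hnt => ?_⟩
  have ht : t₀ ≤ t := h.strictMono.le_iff_le.1 (hn.trans hnt)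
  have hbound := hP.abs_rnD_div_prod_rr_sub_one_le hp fun S hS =>
    (h.sum_abs_blockLogOdds_sub_le x hx hS hnt).trans (ht₀ t ht)
  rwa [Real.exp_log (by linarith), add_sub_cancel_left] at hbound

section Kosloff

lemma two_zpow_neg_floor_logb_add_one_le_inv {r : ℝ} (hr : 0 < r) :
    (2 : ℝ) ^ (-(⌊Real.logb 2 r⌋ + 1)) ≤ r⁻¹ := by
  have hfloor : ⌊Real.logb 2 r⌋ = Int.log 2 r := mod_cast Real.floor_logb_natCast (b := 2) hr.le
  rw [zpow_neg, hfloor]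
  exact inv_anti₀ hr (mod_cast (Int.lt_zpow_succ_log_self one_lt_two r).le)

namespace KosloffData

variable (D : KosloffData)

lemma isBlockScale : IsBlockScale D.M D.N := by
  have hMN (u : ℕ) : D.M u < D.N (u + 1) := by
    rw [D.N_def (u + 1) u.succ_pos, Nat.add_sub_cancel]
    exact Nat.lt_add_of_pos_right (D.nn_pos (u + 1) u.succ_pos)
  have hNM (u : ℕ) : D.N (u + 1) ≤ D.M (u + 1) := by
    rw [D.M_def (u + 1) u.succ_pos]
    exact Nat.le_add_right _ _
  exact ⟨strictMono_nat_of_lt_succ fun u => (hMN u).trans_le (hNM u), by simp [D.M_zero],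
    fun u => (hMN u).le, hNM⟩

lemma lam_pos (u : ℕ) : 0 < D.lam (u + 1) := by
  rw [D.lam_def (u + 1) u.succ_pos]
  exact Real.exp_pos _

lemma M_mul_abs_log_lam_le (u : ℕ) : D.M u * |Real.log (D.lam (u + 1))| ≤ D.eps (u + 1) := by
  have hM : (0 : ℝ) < D.M u := mod_cast D.isBlockScale.M_pos u
  have hratio : 0 < D.M u / D.eps (u + 1) := div_pos hM (D.eps_pos (u + 1) u.succ_pos)
  rw [D.lam_def (u + 1) u.succ_pos, Real.log_exp, Nat.add_sub_cancel, abs_of_pos (by positivity)]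
  calc D.M u * (2 : ℝ) ^ (-(⌊Real.logb 2 (D.M u / D.eps (u + 1))⌋ + 1))
      ≤ D.M u * (D.M u / D.eps (u + 1))⁻¹ := by
        gcongr
        exact two_zpow_neg_floor_logb_add_one_le_inv hratio
    _ = D.eps (u + 1) := by rw [inv_div, mul_div_cancel₀ _ hM.ne']

lemma summable_M_mul_abs_log_lam :
    Summable fun u => D.M u * |Real.log (D.lam (u + 1))| :=
  ((summable_nat_add_iff 1).2 D.eps_summable).of_nonneg_of_le (fun u => by positivity)
    D.M_mul_abs_log_lam_le

lemma le_M_tOf (n : ℕ) : n ≤ D.M (tOf D n) := by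
  have hexists : {t | 1 ≤ t ∧ n < D.N t}.Nonempty :=
    ⟨n + 1 + 1, by lia, (D.isBlockScale.strictMono.le_apply (x := n + 1)).trans
      (D.isBlockScale.le_N (n + 1))⟩
  obtain ⟨hpos, hlt⟩ : 1 ≤ tOf D n ∧ n < D.N (tOf D n) := Nat.sInf_mem hexists
  obtain ⟨u, hu⟩ := Nat.exists_eq_add_of_le' hpos
  rw [hu] at hlt ⊢
  exact hlt.le.trans (D.isBlockScale.N_le u)

end KosloffData

namespace IsKosloffMeasure

variable {D : KosloffData} {p : ℤ → ℝ} {P : Measure Xspace}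

lemma isProductMeasure (hP : IsKosloffMeasure D p P) : IsProductMeasure (fun k => 1 - p k) P :=
  ⟨hP.1, fun k l b => by simpa [coordWt] using hP.2.2.2.2 k l b⟩

lemma eq_sigmoid_neg_blockLogOdds (hP : IsKosloffMeasure D p P) (k : ℤ) :
    p k = Real.sigmoid (-blockLogOdds D.M D.N (fun u => Real.log (D.lam (u + 1))) k) := by
  obtain ⟨-, hnonneg, hblock, hgap, -⟩ := hP
  have hscale := D.isBlockScale
  rcases le_or_gt 0 k with hk | hk
  · rw [hscale.blockLogOdds_of_nonneg _ hk, hnonneg k hk, neg_zero, Real.sigmoid_zero, one_div]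
  obtain ⟨u, hlt, hle⟩ := hscale.exists_neg_M_succ_lt_le_neg_M (k := k) (by rw [D.M_zero]; lia)
  rw [hscale.blockLogOdds_eq_indicator _ hlt hle]
  by_cases hmem : k ∈ block D.M D.N u
  · rw [Set.indicator_of_mem hmem, hblock (u + 1) u.succ_pos k hmem.1 hmem.2, Real.sigmoid_def,
      neg_neg, Real.exp_log (D.lam_pos u), one_div]
  · have hkN : k ≤ -(D.N (u + 1) : ℤ) := not_lt.1 fun h => hmem ⟨h, hle⟩
    rw [Set.indicator_of_notMem hmem, hgap (u + 1) u.succ_pos k hlt hkN, neg_zero,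
      Real.sigmoid_zero, one_div]

end IsKosloffMeasure

end Kosloff

/-- `(Tⁿ)'(w)` is asymptotically equal, uniformly in `w` (a.e.), to the finite
product `∏_{k=-N_{t(n)}+1}^{n-1} P_{k-n}({w_k})/P_k({w_k})`. -/
theorem rnDeriv_asymptotic_finite_product (D : KosloffData) (p : ℤ → ℝ) (P : Measure Xspace)
    (hP : IsKosloffMeasure D p P) :
    ∀ δ : ℝ, 0 < δ → ∃ n₀ : ℕ, ∀ n : ℕ, n₀ ≤ n → ∀ᵐ w ∂P,
      |(rnD P n w).toReal /
          (∏ k ∈ Finset.Icc (-(D.N (tOf D n) : ℤ) + 1) ((n : ℤ) - 1), rr p n w k) - 1| ≤ δ := by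
  intro δ hδ
  obtain ⟨n₀, hn₀⟩ := rnDeriv_asymptotic_finite_product_general D.isBlockScale
    D.summable_M_mul_abs_log_lam hP.eq_sigmoid_neg_blockLogOdds hP.isProductMeasure hδ
  exact ⟨n₀, fun n hn => hn₀ n hn (tOf D n) (D.le_M_tOf n)⟩
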